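/- Let $X$ be an infinite-dimensional real or complex Banach space, and let $Y_1\subset Y_2\subset\cdots$ be a countable system of linear subspaces of $X$ that is strictly nested in the sense that the closure $\overline{Y_n}$ is a proper subset of $Y_{n+1}$ for every $n\ge 1$ (for instance, closed subspaces with $Y_n\subsetneq Y_{n+1}$). Let $\{d_n\}_{n\ge1}$ be a non-increasing sequence of non-negative real numbers that is strictly decreasing as long as it is positive, i.e. $d_{n+1}<d_n$ whenever $d_n>0$. Assume that there exists a natural number $n_0\ge 1$ such that $$d_n>\sum_{k=n+1}^{\infty}d_k\quad\text{for all } n\ge n_0 \text{ at which } d_n>0$$ (in particular, the series on the right converges for these $n$). Then there is an element $x\in X$ such that $\rho(x,Y_n)=d_n$ for all $n\ge1$, where $\rho(x,Y)=\inf\{\|x-y\|:y\in Y\}$. -/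

import Mathlib

/-!
For finitely many subspaces one builds the element downwards: adding to `x` a multiple of a vector
`z ∈ Yₙ₊₁` changes none of the distances to `Yₙ₊₁, Yₙ₊₂, …`, and the intermediate value theorem
yields a multiple for which the distance to `Yₙ` is `dₙ`, as soon as `‖x‖ ≤ dₙ ≤ ρ(z, Yₙ)`.

For infinitely many subspaces and a summable `d` with `∑_{k > n} dₖ < dₙ`, fix vectors
`zₙ ∈ Yₙ₊₁` with `ρ(zₙ, Yₙ) = dₙ` whose norms exceed `dₙ` by so little that
`∑_{k > n} ‖zₖ‖ ≤ dₙ` still holds. The finite construction then finds, for every `N`, coefficients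
`tₖ ∈ [-1, 1]` such that `∑_{k < N} tₖ zₖ` has the first `N` distances. All these sums lie in
the compact set `{∑ tₖ zₖ : |tₖ| ≤ 1}`, so some point of it has all the distances. Finally the
finite construction adjusts the distances before `n₀`.

Distances to subspaces do not depend on the scalar field, so the space may be taken to be real.
-/

open Metric Set

section InfDist

variable {X : Type*} [SeminormedAddCommGroup X]

theorem infDist_eq_norm_mkQ {R : Type*} [Ring R] [Module R X] (Y : Submodule R X) (x : X) :
    infDist x (Y : Set X) = ‖Y.mkQ x‖ :=
  (QuotientAddGroup.norm_mk (S := Y.toAddSubgroup) x).symm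

theorem infDist_add_of_mem {R : Type*} [Ring R] [Module R X] {Y : Submodule R X} (x : X) {y : X}
    (hy : y ∈ Y) : infDist (x + y) (Y : Set X) = infDist x (Y : Set X) := by
  have hy0 : Y.mkQ y = 0 := by simpa using hy
  rw [infDist_eq_norm_mkQ, infDist_eq_norm_mkQ, map_add, hy0, add_zero]

theorem infDist_le_norm {R : Type*} [Ring R] [Module R X] (Y : Submodule R X) (x : X) :
    infDist x (Y : Set X) ≤ ‖x‖ :=
  (infDist_eq_norm_mkQ Y x).trans_le (Submodule.Quotient.norm_mk_le Y x)

variable [NormedSpace ℝ X]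

theorem norm_smul_le_of_mem_Icc {t : ℝ} (ht : t ∈ Icc (-1) 1) (x : X) : ‖t • x‖ ≤ ‖x‖ := by
  rw [norm_smul]
  exact mul_le_of_le_one_left (norm_nonneg x) (abs_le.2 ht)

theorem exists_norm_add_smul_eq {x z : X} {r : ℝ} (hx : ‖x‖ ≤ r) (hz : r ≤ ‖z‖) :
    ∃ t ∈ Icc (-1 : ℝ) 1, ‖x + t • z‖ = r := by
  obtain ⟨c, hc, hcr⟩ : ∃ c ∈ Icc (-1 : ℝ) 1, r ≤ ‖x + c • z‖ := by
    have htwo : 2 * ‖z‖ ≤ ‖x + (1 : ℝ) • z‖ + ‖x + (-1 : ℝ) • z‖ := by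
      calc 2 * ‖z‖ = ‖(x + (1 : ℝ) • z) - (x + (-1 : ℝ) • z)‖ := by
            rw [show (x + (1 : ℝ) • z) - (x + (-1 : ℝ) • z) = (2 : ℝ) • z by module, norm_smul,
              Real.norm_ofNat]
        _ ≤ _ := norm_sub_le _ _
    rcases le_total r ‖x + (1 : ℝ) • z‖ with h | h
    · exact ⟨1, by norm_num, h⟩
    · exact ⟨-1, by norm_num, by linarith⟩
  have hcont : Continuous fun t : ℝ => ‖x + t • z‖ := by fun_prop
  exact isPreconnected_Icc.intermediate_value (by norm_num : (0 : ℝ) ∈ Icc (-1 : ℝ) 1) hc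
    hcont.continuousOn ⟨by simpa using hx, hcr⟩

theorem exists_infDist_add_smul_eq {Y : Submodule ℝ X} {x z : X} {r : ℝ}
    (hx : infDist x (Y : Set X) ≤ r) (hz : r ≤ infDist z (Y : Set X)) :
    ∃ t ∈ Icc (-1 : ℝ) 1, infDist (x + t • z) (Y : Set X) = r := by
  simp only [infDist_eq_norm_mkQ, map_add, map_smul] at hx hz ⊢
  exact exists_norm_add_smul_eq hx hz

theorem exists_mem_infDist_eq_norm_lt {Y Z : Submodule ℝ X} (hYZ : Y.topologicalClosure < Z)
    {r s : ℝ} (hr : 0 ≤ r) (hrs : r < s) : ∃ z ∈ Z, infDist z (Y : Set X) = r ∧ ‖z‖ < s := by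
  obtain ⟨z, hzZ, hzY⟩ := SetLike.exists_of_lt hYZ
  have hpos : 0 < ‖Y.mkQ z‖ := by
    rw [← infDist_eq_norm_mkQ]
    exact (infDist_pos_iff_notMem_closure ⟨0, Y.zero_mem⟩).1 hzY
  set w : X := (r / ‖Y.mkQ z‖) • z
  have hw : infDist w (Y : Set X) = r := by
    rw [infDist_eq_norm_mkQ, map_smul, norm_smul, Real.norm_of_nonneg (by positivity),
      div_mul_cancel₀ _ hpos.ne']
  obtain ⟨y, hy, hwy⟩ := (infDist_lt_iff ⟨0, Y.zero_mem⟩).1 (hw.trans_lt hrs)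
  refine ⟨w + -y, ?_, ?_, by rwa [← sub_eq_add_neg, ← dist_eq_norm]⟩
  · exact Z.add_mem (Z.smul_mem _ hzZ) (Z.neg_mem (hYZ.le (Y.le_topologicalClosure hy)))
  · rw [infDist_add_of_mem w (Y.neg_mem hy), hw]

theorem exists_mem_infDist_add_eq {Y Z : Submodule ℝ X} (hYZ : Y.topologicalClosure < Z) {x : X}
    {r : ℝ} (hx : infDist x (Z : Set X) < r) : ∃ y ∈ Z, infDist (x + y) (Y : Set X) = r := by
  obtain ⟨y, hy, hxy⟩ := (infDist_lt_iff ⟨0, Z.zero_mem⟩).1 hx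
  obtain ⟨z, hz, hzr, -⟩ :=
    exists_mem_infDist_eq_norm_lt hYZ (infDist_nonneg.trans hx.le) (lt_add_one r)
  have hnorm : infDist (x + -y) (Y : Set X) ≤ r := by
    rw [← sub_eq_add_neg]
    exact (infDist_le_norm Y _).trans (dist_eq_norm x y ▸ hxy.le)
  obtain ⟨t, -, ht⟩ := exists_infDist_add_smul_eq hnorm hzr.ge
  exact ⟨-y + t • z, Z.add_mem (Z.neg_mem hy) (Z.smul_mem t hz), by rwa [← add_assoc]⟩

end InfDist

theorem monotone_of_topologicalClosure_lt_succ {R M : Type*} [Semiring R] [AddCommMonoid M]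
    [Module R M] [TopologicalSpace M] [ContinuousAdd M] [ContinuousConstSMul R M]
    {Y : ℕ → Submodule R M} (hY : ∀ n, (Y n).topologicalClosure < Y (n + 1)) : Monotone Y :=
  monotone_nat_of_le_succ fun n => (Y n).le_topologicalClosure.trans (hY n).le

section FinitelyManySubspaces

variable {X : Type*} [SeminormedAddCommGroup X] [NormedSpace ℝ X] {Y : ℕ → Submodule ℝ X}
  {d : ℕ → ℝ}

theorem exists_infDist_eq_of_forall_ge (hY : ∀ n, (Y n).topologicalClosure < Y (n + 1))
    (N : ℕ) (hd : ∀ n < N, d (n + 1) < d n)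
    (h : ∃ x : X, ∀ n ≥ N, infDist x (Y n : Set X) = d n) :
    ∃ x : X, ∀ n, infDist x (Y n : Set X) = d n := by
  induction N with
  | zero => simpa using h
  | succ N ih =>
    obtain ⟨x, hx⟩ := h
    obtain ⟨y, hy, hxy⟩ := exists_mem_infDist_add_eq (hY N)
      ((hx (N + 1) le_rfl).trans_lt (hd N N.lt_succ_self))
    refine ih (fun n hn => hd n (hn.trans N.lt_succ_self)) ⟨x + y, fun n hn => ?_⟩
    rcases hn.eq_or_lt with rfl | hlt
    · exact hxy
    · rw [infDist_add_of_mem x (monotone_of_topologicalClosure_lt_succ hY hlt hy), hx n hlt]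

theorem exists_infDist_eq_of_exists_eq_zero (hY : ∀ n, (Y n).topologicalClosure < Y (n + 1))
    (hd_nonneg : ∀ n, 0 ≤ d n) (hd_anti : Antitone d) (hd_strict : ∀ n, 0 < d n → d (n + 1) < d n)
    (hzero : ∃ N, d N = 0) : ∃ x : X, ∀ n, infDist x (Y n : Set X) = d n := by
  classical
  have hd_lt (n : ℕ) (hn : n < Nat.find hzero) : d (n + 1) < d n :=
    hd_strict n ((hd_nonneg n).lt_of_ne' (Nat.find_min hzero hn))
  refine exists_infDist_eq_of_forall_ge hY (Nat.find hzero) hd_lt ⟨0, fun n hn => ?_⟩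
  rw [infDist_zero_of_mem (Y n).zero_mem]
  exact (hd_nonneg n).antisymm ((hd_anti hn).trans_eq (Nat.find_spec hzero))

theorem exists_infDist_sum_Ico_eq (hmono : Monotone Y) {z : ℕ → X}
    (hz_mem : ∀ n, z n ∈ Y (n + 1)) (hz : ∀ n, infDist (z n) (Y n : Set X) = d n)
    {N : ℕ} (htail : ∀ n < N, ∑ k ∈ Finset.Ico (n + 1) N, ‖z k‖ ≤ d n) {m : ℕ} (hm : m ≤ N) :
    ∃ t : ℕ → ℝ, (∀ k, t k ∈ Icc (-1) 1) ∧ ∀ n ∈ Ico m N,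
      infDist (∑ k ∈ Finset.Ico m N, t k • z k) (Y n : Set X) = d n := by
  induction hm using Nat.decreasingInduction with
  | self => exact ⟨0, by simp, by simp⟩
  | of_succ m hm ih =>
    obtain ⟨t, ht, hdist⟩ := ih
    set w : X := ∑ k ∈ Finset.Ico (m + 1) N, t k • z k
    have hw : infDist w (Y m : Set X) ≤ d m := by
      calc infDist w (Y m : Set X) ≤ ‖w‖ := infDist_le_norm _ _
        _ ≤ ∑ k ∈ Finset.Ico (m + 1) N, ‖z k‖ :=
            norm_sum_le_of_le _ fun k _ => norm_smul_le_of_mem_Icc (ht k) (z k)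
        _ ≤ d m := htail m hm
    obtain ⟨s, hs, hsm⟩ := exists_infDist_add_smul_eq hw (hz m).ge
    have hsum : ∑ k ∈ Finset.Ico m N, Function.update t m s k • z k = w + s • z m := by
      rw [Finset.sum_eq_sum_Ico_succ_bot hm, Function.update_self, add_comm]
      congr 1
      refine Finset.sum_congr rfl fun k hk => ?_
      rw [Function.update_of_ne (Nat.lt_of_succ_le (Finset.mem_Ico.1 hk).1).ne']
    refine ⟨Function.update t m s, ?_, fun n hn => ?_⟩
    · exact Function.forall_update_iff t (fun _ a => a ∈ Icc (-1) 1) |>.2 ⟨hs, fun k _ => ht k⟩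
    · rw [hsum]
      rcases hn.1.eq_or_lt with rfl | hlt
      · exact hsm
      · rw [infDist_add_of_mem w (hmono hlt ((Y (m + 1)).smul_mem s (hz_mem m))),
          hdist n ⟨hlt, hn.2⟩]

end FinitelyManySubspaces

section HilbertCube

variable {ι X : Type*} [NormedAddCommGroup X] [NormedSpace ℝ X] {z : ι → X}

/-- The generalized Hilbert cube with edges `z i`, consisting of the sums `∑ tᵢ zᵢ` with
coefficients `tᵢ ∈ [-1, 1]`; it is meant for families `z` with `∑ ‖z i‖ < ∞`. -/
def hilbertCube (z : ι → X) : Set X :=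
  (fun t : ι → ℝ => ∑' i, t i • z i) '' univ.pi fun _ => Icc (-1) 1

theorem sum_smul_mem_hilbertCube {t : ι → ℝ} (ht : ∀ i, t i ∈ Icc (-1) 1) (s : Finset ι) :
    ∑ i ∈ s, t i • z i ∈ hilbertCube z := by
  classical
  refine ⟨fun i => if i ∈ s then t i else 0, fun i _ => ?_, ?_⟩
  · dsimp only
    split_ifs
    exacts [ht i, by simp]
  · dsimp only
    rw [tsum_eq_sum (s := s) fun i hi => by rw [if_neg hi, zero_smul]]
    exact Finset.sum_congr rfl fun i hi => by rw [if_pos hi]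

theorem isCompact_hilbertCube [CompleteSpace X] (hz : Summable fun i => ‖z i‖) :
    IsCompact (hilbertCube z) := by
  refine (isCompact_univ_pi fun _ => isCompact_Icc).image_of_continuousOn ?_
  exact continuousOn_tsum (fun i => by fun_prop) hz fun i t ht =>
    norm_smul_le_of_mem_Icc (ht i (mem_univ i)) (z i)

end HilbertCube

theorem exists_pos_forall_sum_le {δ : ℕ → ℝ} (hδ : ∀ n, 0 < δ n) :
    ∃ η : ℕ → ℝ, (∀ n, 0 < η n) ∧
      ∀ n (s : Finset ℕ), (∀ k ∈ s, n ≤ k) → ∑ k ∈ s, η k ≤ δ n := by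
  have hη (k : ℕ) : ∃ η > 0, ∀ n ∈ Finset.range (k + 1), η < δ n / 2 * (1 / 2) ^ k := by
    obtain ⟨η, hη_pos, hη_lt⟩ := Order.exists_between_finsets {0}
      ((Finset.range (k + 1)).image fun n => δ n / 2 * (1 / 2) ^ k) (by
        simp only [Finset.mem_singleton, forall_eq, Finset.forall_mem_image]
        exact fun n _ => mul_pos (half_pos (hδ n)) (by positivity))
    exact ⟨η, hη_pos 0 (Finset.mem_singleton_self 0), Finset.forall_mem_image.1 hη_lt⟩
  choose η hη_pos hη_lt using hη
  refine ⟨η, hη_pos, fun n s hs => ?_⟩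
  calc ∑ k ∈ s, η k ≤ ∑ k ∈ s, δ n / 2 * (1 / 2) ^ k :=
        Finset.sum_le_sum fun k hk => (hη_lt k n (by grind)).le
    _ = δ n / 2 * ∑ k ∈ s, (1 / 2) ^ k := (Finset.mul_sum ..).symm
    _ ≤ δ n / 2 * 2 := by
        refine mul_le_mul_of_nonneg_left ?_ (half_pos (hδ n)).le
        exact (summable_geometric_two.sum_le_tsum s fun k _ => by positivity).trans_eq
          tsum_geometric_two
    _ = δ n := by ring

section InfinitelyManySubspaces

variable {X : Type*} [NormedAddCommGroup X] [NormedSpace ℝ X] [CompleteSpace X]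
  {Y : ℕ → Submodule ℝ X} {d : ℕ → ℝ}

theorem exists_mem_hilbertCube_infDist_eq (hmono : Monotone Y) {z : ℕ → X}
    (hz_mem : ∀ n, z n ∈ Y (n + 1)) (hz : ∀ n, infDist (z n) (Y n : Set X) = d n)
    (hsum : Summable fun n => ‖z n‖)
    (htail : ∀ n N, ∑ k ∈ Finset.Ico (n + 1) N, ‖z k‖ ≤ d n) :
    ∃ x ∈ hilbertCube z, ∀ n, infDist x (Y n : Set X) = d n := by
  have hclosed (n : ℕ) : IsClosed {x : X | infDist x (Y n : Set X) = d n} :=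
    isClosed_eq (continuous_infDist_pt _) continuous_const
  obtain ⟨x, hx, hxd⟩ := (isCompact_hilbertCube hsum).inter_iInter_nonempty _ hclosed fun u => by
    obtain ⟨N, hN⟩ := u.exists_nat_subset_range
    obtain ⟨t, ht, hdist⟩ :=
      exists_infDist_sum_Ico_eq hmono hz_mem hz (fun n _ => htail n N) N.zero_le
    exact ⟨_, sum_smul_mem_hilbertCube ht _,
      mem_iInter₂.2 fun n hn => hdist n ⟨n.zero_le, Finset.mem_range.1 (hN hn)⟩⟩
  exact ⟨x, hx, mem_iInter.1 hxd⟩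

theorem exists_infDist_eq_of_tsum_tail_lt (hY : ∀ n, (Y n).topologicalClosure < Y (n + 1))
    (hd_nonneg : ∀ n, 0 ≤ d n) (hd_sum : Summable d) (hd_tail : ∀ n, ∑' k, d (n + 1 + k) < d n) :
    ∃ x : X, ∀ n, infDist x (Y n : Set X) = d n := by
  obtain ⟨η, hη, hη_sum⟩ := exists_pos_forall_sum_le fun n => sub_pos.2 (hd_tail n)
  choose z hz_mem hz hz_norm using fun n =>
    exists_mem_infDist_eq_norm_lt (hY n) (hd_nonneg n) (lt_add_of_pos_right (d n) (hη n))
  have hη_summable : Summable η :=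
    summable_of_sum_le (fun n => (hη n).le) fun s => hη_sum 0 s (by simp)
  have hz_sum : Summable fun n => ‖z n‖ :=
    (hd_sum.add hη_summable).of_nonneg_of_le (fun n => norm_nonneg _) fun n => (hz_norm n).le
  have hd_Ico (n N : ℕ) : ∑ k ∈ Finset.Ico (n + 1) N, d k ≤ ∑' k, d (n + 1 + k) := by
    rw [Finset.sum_Ico_eq_sum_range]
    exact (hd_sum.comp_injective (add_right_injective (n + 1))).sum_le_tsum _
      fun k _ => hd_nonneg _
  have hz_tail (n N : ℕ) : ∑ k ∈ Finset.Ico (n + 1) N, ‖z k‖ ≤ d n := by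
    calc ∑ k ∈ Finset.Ico (n + 1) N, ‖z k‖ ≤ ∑ k ∈ Finset.Ico (n + 1) N, (d k + η k) :=
          Finset.sum_le_sum fun k _ => (hz_norm k).le
      _ = ∑ k ∈ Finset.Ico (n + 1) N, d k + ∑ k ∈ Finset.Ico (n + 1) N, η k :=
          Finset.sum_add_distrib
      _ ≤ ∑' k, d (n + 1 + k) + (d n - ∑' k, d (n + 1 + k)) :=
          add_le_add (hd_Ico n N) (hη_sum n _ (by grind))
      _ = d n := by ring
  obtain ⟨x, -, hx⟩ := exists_mem_hilbertCube_infDist_eq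
    (monotone_of_topologicalClosure_lt_succ hY) hz_mem hz hz_sum hz_tail
  exact ⟨x, hx⟩

end InfinitelyManySubspaces

/-- The sequences are indexed from `0` instead of `1`. `Metric.infDist x (Y n)` is `ρ(x, Yₙ)`.
The inequality between `d n` and the tail of the series includes the convergence of the tail. -/
theorem stmt_5 {𝕜 : Type*} [RCLike 𝕜]
    {X : Type*} [NormedAddCommGroup X] [NormedSpace 𝕜 X] [CompleteSpace X]
    (hinf : ¬ FiniteDimensional 𝕜 X)
    (Y : ℕ → Submodule 𝕜 X) (hY : ∀ n, (Y n).topologicalClosure < Y (n + 1))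
    (d : ℕ → ℝ) (hd_nonneg : ∀ n, 0 ≤ d n) (hd_anti : Antitone d)
    (hd_strict : ∀ n, 0 < d n → d (n + 1) < d n)
    (hd_tail : ∃ n₀ : ℕ, ∀ n ≥ n₀, 0 < d n →
      Summable (fun k : ℕ => d (n + 1 + k)) ∧ ∑' k : ℕ, d (n + 1 + k) < d n) :
    ∃ x : X, ∀ n, Metric.infDist x (Y n : Set X) = d n := by
  let _ := NormedSpace.restrictScalars ℝ 𝕜 X
  have _ : IsScalarTower ℝ 𝕜 X := RestrictScalars.isScalarTower ℝ 𝕜 X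
  obtain ⟨Z, hZ, hZY⟩ : ∃ Z : ℕ → Submodule ℝ X,
      (∀ n, (Z n).topologicalClosure < Z (n + 1)) ∧ ∀ n, (Y n : Set X) = Z n :=
    ⟨fun n => (Y n).restrictScalars ℝ, hY, fun _ => rfl⟩
  simp only [hZY]
  by_cases hzero : ∃ N, d N = 0
  · exact exists_infDist_eq_of_exists_eq_zero hZ hd_nonneg hd_anti hd_strict hzero
  · have hpos (n : ℕ) : 0 < d n := (hd_nonneg n).lt_of_ne' fun h => hzero ⟨n, h⟩
    obtain ⟨N, hN⟩ := hd_tail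
    have hsum : Summable fun n => d (N + n) := by
      have hN_tail := (hN N le_rfl (hpos N)).1
      simp only [add_right_comm N 1, add_assoc N _ 1] at hN_tail
      exact (summable_nat_add_iff 1).1 hN_tail
    obtain ⟨x, hx⟩ := exists_infDist_eq_of_tsum_tail_lt (fun n => hZ (N + n))
      (fun n => hd_nonneg (N + n)) hsum
      fun n => by simpa only [add_assoc] using (hN (N + n) (N.le_add_right n) (hpos _)).2
    refine exists_infDist_eq_of_forall_ge hZ N (fun n _ => hd_strict n (hpos n))
      ⟨x, fun n hn => ?_⟩
    simpa only [Nat.add_sub_cancel' hn] using hx (n - N)
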